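/- arXiv:1606.04892 — 3 statements merged into one kernel-verified Lean document; each statement's English description precedes it below -/
import Mathlib

section
/- Symbol estimate for the difference of the inverse symbols (Proposition A.2(2)). Fix λ₁ > 0 and a smooth function χ : ℝ → [0,1] with χ(λ) = 1 for λ ≤ λ₁/2 and χ(λ) = 0 for λ ≥ λ₁. For m > 0 set P_m(λ) = 2m(√(λ+m²) − m) + χ(λ) and P_∞(λ) = λ + χ(λ). Then for every positive integer k there exists a constant C_k > 0 such that for all m ≥ 2 and all λ > 0, | (d/dλ)^k ( 1/P_∞(λ) − 1/P_m(λ) ) | ≤ (C_k / λ^k) · min{ 1/m², 1/( m (λ+1)^{1/2} ) }. -/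
/-!
The proof is a symbol calculus uniform in `m`. A family `f m` on `(0, ∞)` is a symbol of weight `w`
(`IsSymbol f w`) if `|λ ^ n * f_m⁽ⁿ⁾(λ)| ≤ C_n * w m λ` for all `n`, `m ≥ 2` and `λ > 0`. By the
Leibniz rule weights multiply under products (`IsSymbol.mul`). Solving the Leibniz expansion of
`f * f⁻¹ = 1` for its top-order term shows that `f⁻¹` is a symbol of weight `w⁻¹` whenever
`f ≥ c * w` (`IsSymbol.inv`), and the same device applied to `s * s = λ + m ^ 2` shows that
`s = √(λ + m ^ 2)` is a symbol of weight `s` (`isSymbol_sq`).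

With `A = s + m` one has `2 * m * (s - m) = Q` where `Q = 2 * m * λ / A`, and
`λ - Q = λ ^ 2 / A ^ 2`. Hence `1 / P_∞ - 1 / P_m = - λ ^ 2 / (A ^ 2 * P_∞ * P_m)`.
Since `P_∞` is comparable to `λ + 1` and `P_m` to `Q + 1`, this is a symbol of weight
`λ ^ 2 / (A ^ 2 * (λ + 1) * (Q + 1)) ≤ λ / (A ^ 2 * Q) = 1 / (2 * m * A)`, and `A` dominates both
`m` and `√(λ + 1)`.
-/

noncomputable section

/-- The regularized pseudo-relativistic symbol `P_m`. -/
def Pm (χ : ℝ → ℝ) (m : ℝ) (l : ℝ) : ℝ :=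
  2 * m * (Real.sqrt (l + m ^ 2) - m) + χ l

/-- The regularized Laplacian symbol `P_∞`. -/
def Pinf (χ : ℝ → ℝ) (l : ℝ) : ℝ :=
  l + χ l

open Finset
open scoped ContDiff

/-- `F` is bounded by a constant times `w`, uniformly in `m ≥ 2` and `l > 0`. -/
def Dom (F w : ℝ → ℝ → ℝ) : Prop :=
  ∃ C : ℝ, 0 ≤ C ∧ ∀ m, 2 ≤ m → ∀ l, 0 < l → |F m l| ≤ C * w m l

namespace Dom

variable {F G w v : ℝ → ℝ → ℝ}

lemma congr (h : Dom F w) (e : ∀ m, 2 ≤ m → ∀ l, 0 < l → G m l = F m l) : Dom G w := by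
  obtain ⟨C, hC, h⟩ := h
  exact ⟨C, hC, fun m hm l hl => by rw [e m hm l hl]; exact h m hm l hl⟩

lemma mono (h : Dom F w) (K : ℝ) (hK : 0 ≤ K)
    (e : ∀ m, 2 ≤ m → ∀ l, 0 < l → w m l ≤ K * v m l) : Dom F v := by
  obtain ⟨C, hC, h⟩ := h
  refine ⟨C * K, by positivity, fun m hm l hl => (h m hm l hl).trans ?_⟩
  rw [mul_assoc]
  exact mul_le_mul_of_nonneg_left (e m hm l hl) hC

lemma add (hF : Dom F w) (hG : Dom G w) : Dom (fun m l => F m l + G m l) w := by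
  obtain ⟨C, hC, hF⟩ := hF
  obtain ⟨D, hD, hG⟩ := hG
  refine ⟨C + D, by positivity, fun m hm l hl => (abs_add_le _ _).trans ?_⟩
  rw [add_mul]
  exact add_le_add (hF m hm l hl) (hG m hm l hl)

lemma mul (hF : Dom F w) (hG : Dom G v) :
    Dom (fun m l => F m l * G m l) (fun m l => w m l * v m l) := by
  obtain ⟨C, hC, hF⟩ := hF
  obtain ⟨D, hD, hG⟩ := hG
  refine ⟨C * D, by positivity, fun m hm l hl => ?_⟩
  rw [abs_mul, mul_mul_mul_comm]
  exact mul_le_mul (hF m hm l hl) (hG m hm l hl) (abs_nonneg _)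
    ((abs_nonneg _).trans (hF m hm l hl))

lemma const_mul (a : ℝ) (hF : Dom F w) : Dom (fun m l => a * F m l) w := by
  obtain ⟨C, hC, hF⟩ := hF
  refine ⟨|a| * C, by positivity, fun m hm l hl => ?_⟩
  rw [abs_mul, mul_assoc]
  exact mul_le_mul_of_nonneg_left (hF m hm l hl) (abs_nonneg _)

lemma sum {F : ℕ → ℝ → ℝ → ℝ} (s : Finset ℕ)
    (h : ∀ i ∈ s, Dom (F i) w) : Dom (fun m l => ∑ i ∈ s, F i m l) w := by
  induction s using Finset.induction_on with
  | empty => exact ⟨0, le_rfl, fun m hm l hl => by simp⟩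
  | insert a s ha ih =>
    simp only [Finset.sum_insert ha]
    exact (h a (mem_insert_self _ _)).add (ih fun i hi => h i (mem_insert_of_mem hi))

end Dom

/-- The scale-invariant derivative `l ^ n * f⁽ⁿ⁾(l)`. -/
def eul (n : ℕ) (f : ℝ → ℝ) (l : ℝ) : ℝ := l ^ n * iteratedDeriv n f l

lemma eul_mul (n : ℕ) {f g : ℝ → ℝ} {l : ℝ} (hf : ContDiffAt ℝ ∞ f l) (hg : ContDiffAt ℝ ∞ g l) :
    eul n (fun x => f x * g x) l
      = ∑ i ∈ range (n + 1), (n.choose i : ℝ) * (eul i f l * eul (n - i) g l) := by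
  have h := iteratedDeriv_mul (n := n) (hf.of_le (by exact_mod_cast le_top))
    (hg.of_le (by exact_mod_cast le_top))
  have e : (fun x => f x * g x) = f * g := rfl
  rw [eul, e, h, mul_sum]
  refine sum_congr rfl fun i hi => ?_
  have hi' : i ≤ n := Nat.lt_succ_iff.1 (mem_range.1 hi)
  have hp : l ^ n = l ^ i * l ^ (n - i) := by rw [← pow_add, Nat.add_sub_cancel' hi']
  rw [eul, eul, hp]
  ring

lemma eul_zero (f : ℝ → ℝ) (l : ℝ) : eul 0 f l = f l := by simp [eul]

/-- `f` is a symbol of weight `w`, uniformly in the parameter `m ≥ 2`: on `(0, ∞)` it is smooth and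
`|f_m⁽ⁿ⁾(l)| ≤ C_n * l ^ (-n) * w m l` for every `n`. -/
def IsSymbol (f w : ℝ → ℝ → ℝ) : Prop :=
  (∀ m, 2 ≤ m → ∀ l, 0 < l → ContDiffAt ℝ ∞ (f m) l) ∧
    ∀ n, Dom (fun m l => eul n (f m) l) w

namespace IsSymbol

variable {f g w v : ℝ → ℝ → ℝ}

lemma congr (h : IsSymbol f w) (e : ∀ m, 2 ≤ m → ∀ l, 0 < l → g m l = f m l) : IsSymbol g w := by
  have key : ∀ m, 2 ≤ m → ∀ l, 0 < l → g m =ᶠ[nhds l] f m := fun m hm l hl => by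
    filter_upwards [lt_mem_nhds hl] with x hx using e m hm x hx
  refine ⟨fun m hm l hl => (h.1 m hm l hl).congr_of_eventuallyEq (key m hm l hl), fun n => ?_⟩
  refine (h.2 n).congr fun m hm l hl => ?_
  rw [eul, eul, (key m hm l hl).iteratedDeriv_eq n]

lemma mono (h : IsSymbol f w) (K : ℝ) (hK : 0 ≤ K)
    (e : ∀ m, 2 ≤ m → ∀ l, 0 < l → w m l ≤ K * v m l) : IsSymbol f v :=
  ⟨h.1, fun n => (h.2 n).mono K hK e⟩

lemma add (hf : IsSymbol f w) (hg : IsSymbol g w) : IsSymbol (fun m l => f m l + g m l) w := by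
  refine ⟨fun m hm l hl => (hf.1 m hm l hl).add (hg.1 m hm l hl), fun n => ?_⟩
  refine ((hf.2 n).add (hg.2 n)).congr fun m hm l hl => ?_
  have h := iteratedDeriv_add (n := n) ((hf.1 m hm l hl).of_le (by exact_mod_cast le_top))
    ((hg.1 m hm l hl).of_le (by exact_mod_cast le_top))
  have e : (fun x => f m x + g m x) = f m + g m := rfl
  beta_reduce
  rw [eul, eul, eul, e, h, mul_add]

lemma mul (hf : IsSymbol f w) (hg : IsSymbol g v) :
    IsSymbol (fun m l => f m l * g m l) (fun m l => w m l * v m l) := by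
  refine ⟨fun m hm l hl => (hf.1 m hm l hl).mul (hg.1 m hm l hl), fun n => ?_⟩
  refine Dom.congr (F := fun m l => ∑ i ∈ range (n + 1),
    (n.choose i : ℝ) * (eul i (f m) l * eul (n - i) (g m) l)) ?_
    fun m hm l hl => eul_mul n (hf.1 m hm l hl) (hg.1 m hm l hl)
  exact Dom.sum _ fun i _ => ((hf.2 i).mul (hg.2 (n - i))).const_mul _

/-- The reciprocal of an elliptic symbol (one bounded below by its weight) is a symbol of the
reciprocal weight. -/
lemma inv (hw : ∀ m, 2 ≤ m → ∀ l, 0 < l → 0 < w m l) (c : ℝ) (hc : 0 < c)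
    (hlow : ∀ m, 2 ≤ m → ∀ l, 0 < l → c * w m l ≤ f m l) (hf : IsSymbol f w) :
    IsSymbol (fun m l => (f m l)⁻¹) (fun m l => (w m l)⁻¹) := by
  have hpos : ∀ m, 2 ≤ m → ∀ l, 0 < l → 0 < f m l := fun m hm l hl =>
    (mul_pos hc (hw m hm l hl)).trans_le (hlow m hm l hl)
  have hsm : ∀ m, 2 ≤ m → ∀ l, 0 < l → ContDiffAt ℝ ∞ (fun l => (f m l)⁻¹) l :=
    fun m hm l hl => (hf.1 m hm l hl).inv (hpos m hm l hl).ne'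
  have h0 : Dom (fun m l => (f m l)⁻¹) (fun m l => (w m l)⁻¹) := by
    refine ⟨c⁻¹, by positivity, fun m hm l hl => ?_⟩
    rw [abs_of_pos (inv_pos.2 (hpos m hm l hl)), ← mul_inv]
    exact inv_anti₀ (mul_pos hc (hw m hm l hl)) (hlow m hm l hl)
  refine ⟨hsm, fun n => ?_⟩
  induction n using Nat.strong_induction_on with
  | _ n ih =>
    obtain _ | p := n
    · exact h0.congr fun m hm l hl => eul_zero _ _
    -- The Leibniz expansion of `f * f⁻¹ = 1`, solved for the top-order derivative of `f⁻¹`.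
    have hD : Dom (fun m l => (-1) * ((f m l)⁻¹ * ∑ i ∈ range (p + 1),
        ((p + 1).choose (i + 1) : ℝ) *
          (eul (i + 1) (f m) l * eul (p + 1 - (i + 1)) (fun l => (f m l)⁻¹) l)))
        (fun m l => (w m l)⁻¹ * (w m l * (w m l)⁻¹)) := by
      refine (h0.mul (Dom.sum _ fun i hi => ?_)).const_mul _
      exact ((hf.2 (i + 1)).mul (ih (p + 1 - (i + 1)) (by omega))).const_mul _
    refine (hD.congr fun m hm l hl => ?_).mono 1 zero_le_one fun m hm l hl => ?_
    · have hL := eul_mul (p + 1) (hf.1 m hm l hl) (hsm m hm l hl)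
      have h1 : eul (p + 1) (fun x => f m x * (f m x)⁻¹) l = 0 := by
        have : (fun x => f m x * (f m x)⁻¹) =ᶠ[nhds l] fun _ => 1 := by
          filter_upwards [lt_mem_nhds hl] with x hx using mul_inv_cancel₀ (hpos m hm x hx).ne'
        rw [eul, this.iteratedDeriv_eq, iteratedDeriv_const]
        simp
      rw [h1, sum_range_succ'] at hL
      simp only [Nat.choose_zero_right, Nat.cast_one, one_mul, eul_zero, Nat.sub_zero] at hL
      have hne := (hpos m hm l hl).ne'
      rw [eq_comm, add_eq_zero_iff_eq_neg] at hL
      rw [hL]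
      field_simp
    · rw [mul_inv_cancel₀ (hw m hm l hl).ne', mul_one, one_mul]

end IsSymbol

/-- A smooth positive `s` whose square is a symbol of weight `s ^ 2` is a symbol of weight `s`. -/
lemma isSymbol_sq {s : ℝ → ℝ → ℝ} (hpos : ∀ m, 2 ≤ m → ∀ l, 0 < l → 0 < s m l)
    (hsm : ∀ m, 2 ≤ m → ∀ l, 0 < l → ContDiffAt ℝ ∞ (s m) l)
    (h : IsSymbol (fun m l => s m l * s m l) (fun m l => s m l * s m l)) : IsSymbol s s := by
  have hinv : Dom (fun m l => (s m l)⁻¹) (fun m l => (s m l)⁻¹) :=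
    ⟨1, zero_le_one, fun m hm l hl => by
      rw [abs_of_pos (inv_pos.2 (hpos m hm l hl)), one_mul]⟩
  refine ⟨hsm, fun n => ?_⟩
  induction n using Nat.strong_induction_on with
  | _ n ih =>
    obtain _ | p := n
    · refine ⟨1, zero_le_one, fun m hm l hl => ?_⟩
      beta_reduce
      rw [eul_zero, abs_of_pos (hpos m hm l hl), one_mul]
    -- The top-order derivative occurs in exactly the two extreme terms of the Leibniz expansion.
    have hD : Dom (fun m l => (1 / 2) * ((s m l)⁻¹ *
        (eul (p + 1) (fun x => s m x * s m x) l + (-1) * ∑ i ∈ range p,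
          ((p + 1).choose (i + 1) : ℝ) * (eul (i + 1) (s m) l * eul (p + 1 - (i + 1)) (s m) l))))
        (fun m l => (s m l)⁻¹ * (s m l * s m l)) := by
      refine (hinv.mul ((h.2 (p + 1)).add
        ((Dom.sum _ fun i hi => ?_).const_mul _))).const_mul _
      have := mem_range.1 hi
      exact ((ih (i + 1) (by omega)).mul (ih (p + 1 - (i + 1)) (by omega))).const_mul _
    refine (hD.congr fun m hm l hl => ?_).mono 1 zero_le_one fun m hm l hl => ?_
    · have hL := eul_mul (p + 1) (hsm m hm l hl) (hsm m hm l hl)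
      rw [sum_range_succ', sum_range_succ] at hL
      simp only [Nat.choose_zero_right, Nat.choose_self, Nat.cast_one, one_mul, eul_zero,
        Nat.sub_zero, Nat.sub_self] at hL
      have hne := (hpos m hm l hl).ne'
      rw [hL]
      field_simp
      ring
    · have hne := (hpos m hm l hl).ne'
      apply le_of_eq
      field_simp

lemma isSymbol_const {a : ℝ → ℝ} (ha : ∀ m, 2 ≤ m → 0 ≤ a m) :
    IsSymbol (fun m _ => a m) (fun m _ => a m) := by
  refine ⟨fun m hm l hl => contDiffAt_const, fun n => ⟨1, zero_le_one, fun m hm l hl => ?_⟩⟩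
  have := ha m hm
  beta_reduce
  rw [eul, iteratedDeriv_const]
  split_ifs with h
  · simp [h, abs_of_nonneg this]
  · simpa using this

lemma isSymbol_id : IsSymbol (fun _ l => l) (fun _ l => l) := by
  refine ⟨fun m hm l hl => contDiffAt_id, fun n => ⟨1, zero_le_one, fun m hm l hl => ?_⟩⟩
  have e : (fun l : ℝ => l) = id := rfl
  beta_reduce
  rw [eul, e, iteratedDeriv_id]
  split_ifs with h h'
  · simp [h, abs_of_pos hl]
  · simp [h', abs_of_pos hl]
  · simpa using hl.le

lemma isSymbol_cutoff {lam1 : ℝ} {χ : ℝ → ℝ} (hχ : ContDiff ℝ ∞ χ)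
    (hχzero : ∀ l : ℝ, lam1 ≤ l → χ l = 0) : IsSymbol (fun _ => χ) (fun _ _ => 1) := by
  refine ⟨fun m hm l hl => hχ.contDiffAt, fun n => ?_⟩
  have hcont : Continuous (fun l => eul n χ l) :=
    (continuous_id.pow n).mul (hχ.continuous_iteratedDeriv n (by exact_mod_cast le_top))
  obtain ⟨C, hC⟩ := (isCompact_Icc (a := (0 : ℝ)) (b := lam1)).exists_bound_of_continuousOn
    hcont.continuousOn
  refine ⟨max C 0, le_max_right _ _, fun m hm l hl => ?_⟩
  rw [mul_one]
  rcases le_or_gt l lam1 with h | h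
  · exact (hC l ⟨hl.le, h⟩).trans (le_max_left _ _)
  · have : χ =ᶠ[nhds l] fun _ => 0 := by
      filter_upwards [lt_mem_nhds h] with x hx using hχzero x hx.le
    beta_reduce
    rw [eul, this.iteratedDeriv_eq, iteratedDeriv_const]
    simp

/-- Adding the cutoff makes `q` comparable to `q + 1` as soon as `q` is bounded below where the
cutoff need not be `1`. -/
lemma add_cutoff_lower {lam1 : ℝ} {χ : ℝ → ℝ} (hχrange : ∀ l : ℝ, χ l ∈ Set.Icc (0:ℝ) 1)
    (hχone : ∀ l : ℝ, l ≤ lam1 / 2 → χ l = 1) {c₀ : ℝ} (hc₀ : 0 < c₀) {q l : ℝ} (hq : 0 ≤ q)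
    (h : lam1 / 2 ≤ l → c₀ ≤ q) : c₀ / (1 + c₀) * (q + 1) ≤ q + χ l := by
  rw [div_mul_eq_mul_div, div_le_iff₀ (by positivity)]
  rcases le_total l (lam1 / 2) with hl | hl
  · rw [hχone l hl]
    nlinarith
  · have h1 := h hl
    have h2 := (hχrange l).1
    nlinarith [mul_nonneg h2 hc₀.le]

/-- **Symbol estimate for the difference of the inverse symbols** (Proposition A.2(2)). -/
theorem symbol_inverse_difference_estimate
    (lam1 : ℝ) (hlam1 : 0 < lam1) (χ : ℝ → ℝ)
    (hχ : ContDiff ℝ (⊤ : ℕ∞) χ)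
    (hχrange : ∀ l : ℝ, χ l ∈ Set.Icc (0:ℝ) 1)
    (hχone : ∀ l : ℝ, l ≤ lam1 / 2 → χ l = 1)
    (hχzero : ∀ l : ℝ, lam1 ≤ l → χ l = 0)
    (k : ℕ) (hk : 1 ≤ k) :
    ∃ C > (0:ℝ), ∀ m : ℝ, 2 ≤ m → ∀ lam : ℝ, 0 < lam →
      |iteratedDeriv k (fun l => 1 / Pinf χ l - 1 / Pm χ m l) lam| ≤
        C / lam ^ k * min (1 / m ^ 2) (1 / (m * (lam + 1) ^ ((1:ℝ)/2))) := by
  let s : ℝ → ℝ → ℝ := fun m l => Real.sqrt (l + m ^ 2)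
  let A : ℝ → ℝ → ℝ := fun m l => s m l + m
  let Q : ℝ → ℝ → ℝ := fun m l => 2 * m * l * (A m l)⁻¹
  have hs : ∀ m, 2 ≤ m → ∀ l, 0 < l → 0 < s m l := fun m hm l hl =>
    Real.sqrt_pos.2 (by positivity)
  have hss : ∀ m, 2 ≤ m → ∀ l, 0 < l → s m l * s m l = l + m ^ 2 := fun m hm l hl =>
    Real.mul_self_sqrt (by positivity)
  have hA : ∀ m, 2 ≤ m → ∀ l, 0 < l → 0 < A m l := fun m hm l hl =>
    add_pos (hs m hm l hl) (by linarith)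
  have hQ : ∀ m, 2 ≤ m → ∀ l, 0 < l → 0 < Q m l := fun m hm l hl => by
    have := hA m hm l hl
    have : 0 < m := by linarith
    positivity
  have hcut := isSymbol_cutoff hχ hχzero
  have symS : IsSymbol s s := by
    refine isSymbol_sq hs (fun m hm l hl => ?_) ?_
    · exact (contDiffAt_id.add contDiffAt_const).sqrt (by simp only [id]; positivity)
    · refine ((isSymbol_id.mono 1 zero_le_one fun m hm l hl => ?_).add
        ((isSymbol_const (a := fun m => m ^ 2) fun m hm => by positivity).mono 1 zero_le_one
          fun m hm l hl => ?_)).congr fun m hm l hl => hss m hm l hl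
      · rw [hss m hm l hl, one_mul]
        nlinarith
      · rw [hss m hm l hl, one_mul]
        linarith
  have symA : IsSymbol A A := by
    refine (symS.mono 1 zero_le_one fun m hm l hl => ?_).add
      ((isSymbol_const (a := fun m => m) fun m hm => by linarith).mono 1 zero_le_one
        fun m hm l hl => ?_)
    · simp only [A]
      linarith
    · have := hs m hm l hl
      simp only [A]
      linarith
  have symAinv := symA.inv hA 1 one_pos fun m hm l hl => (one_mul (A m l)).le
  have symQ : IsSymbol Q Q :=
    ((isSymbol_const (a := fun m => 2 * m) fun m hm => by linarith).mul isSymbol_id).mul symAinv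
  have symR : IsSymbol (fun _ l => l + χ l) (fun _ l => l + 1) := by
    refine (isSymbol_id.mono 1 zero_le_one fun m hm l hl => ?_).add
      (hcut.mono 1 zero_le_one fun m hm l hl => ?_) <;> linarith
  have symP : IsSymbol (fun m l => Q m l + χ l) (fun m l => Q m l + 1) := by
    refine (symQ.mono 1 zero_le_one fun m hm l hl => ?_).add
      (hcut.mono 1 zero_le_one fun m hm l hl => ?_)
    · linarith
    · linarith [hQ m hm l hl]
  have hR1 : ∀ m : ℝ, 2 ≤ m → ∀ l : ℝ, 0 < l → 0 < l + 1 := fun m hm l hl => by positivity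
  have hP1 : ∀ m, 2 ≤ m → ∀ l, 0 < l → 0 < Q m l + 1 := fun m hm l hl => by
    linarith [hQ m hm l hl]
  have lowR : ∀ m : ℝ, 2 ≤ m → ∀ l : ℝ, 0 < l →
      (lam1 / 2) / (1 + lam1 / 2) * (l + 1) ≤ l + χ l := fun m hm l hl =>
    add_cutoff_lower hχrange hχone (by positivity) hl.le id
  obtain ⟨c₀, hc₀, hlowQ⟩ : ∃ c₀ > 0, ∀ m, 2 ≤ m → ∀ l, 0 < l → lam1 / 2 ≤ l → c₀ ≤ Q m l := by
    refine ⟨4 * (lam1 / 2) / (4 + lam1 / 2), by positivity, fun m hm l hl h => ?_⟩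
    -- From `s ≤ m + l`, `Q ≥ 2 * m * l / (2 * m + l) ≥ 4 * l / (4 + l)`, which increases in `l`.
    have h1 : s m l ≤ m + l := Real.sqrt_le_iff.2 ⟨by positivity, by nlinarith⟩
    simp only [Q]
    rw [← div_eq_mul_inv, div_le_div_iff₀ (by positivity) (hA m hm l hl)]
    have h2 : A m l ≤ 2 * m + l := by simp only [A]; linarith
    have h3 : 4 * (lam1 / 2) * A m l ≤ 4 * (lam1 / 2) * (2 * m + l) :=
      mul_le_mul_of_nonneg_left h2 (by positivity)
    have h4 : 0 ≤ m * (l - lam1 / 2) := mul_nonneg (by linarith) (by linarith)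
    have h5 : 0 ≤ (m - 2) * (lam1 * l) := mul_nonneg (by linarith) (by positivity)
    nlinarith
  have lowP : ∀ m, 2 ≤ m → ∀ l, 0 < l → c₀ / (1 + c₀) * (Q m l + 1) ≤ Q m l + χ l :=
    fun m hm l hl => add_cutoff_lower hχrange hχone hc₀ (hQ m hm l hl).le (hlowQ m hm l hl)
  have symRinv := symR.inv hR1 _ (by positivity) lowR
  have symPinv := symP.inv hP1 _ (by positivity) lowP
  have symD := ((isSymbol_id.mul symAinv).mul (isSymbol_id.mul symAinv)).mul (symRinv.mul symPinv)
  -- The negative of the function to be estimated, which is the plain product in `symD`.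
  have symF : IsSymbol (fun m l => 1 / Pm χ m l - 1 / Pinf χ l)
      (fun m l => min (1 / m ^ 2) (1 / (m * (l + 1) ^ ((1:ℝ)/2)))) := by
    refine (symD.congr fun m hm l hl => ?_).mono 1 zero_le_one fun m hm l hl => ?_
    · have hRp : 0 < l + χ l := lt_of_lt_of_le
        (mul_pos (by positivity) (hR1 m hm l hl)) (lowR m hm l hl)
      have hPp : 0 < Q m l + χ l := lt_of_lt_of_le
        (mul_pos (by positivity) (hP1 m hm l hl)) (lowP m hm l hl)
      have hAp := hA m hm l hl
      have hsq := hss m hm l hl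
      have e1 : 2 * m * (s m l - m) = Q m l := by
        simp only [Q]
        rw [← div_eq_mul_inv, eq_div_iff hAp.ne']
        simp only [A]
        linear_combination 2 * m * hsq
      have e2 : l - Q m l = l * (A m l)⁻¹ * (l * (A m l)⁻¹) := by
        simp only [Q]
        field_simp
        simp only [A]
        linear_combination hsq
      have e3 : Pm χ m l = Q m l + χ l := by rw [← e1]; rfl
      rw [e3, Pinf, ← e2]
      field_simp
      ring
    · have hAp := hA m hm l hl
      have hmp : 0 < m := by linarith
      have hQp := hQ m hm l hl
      have hsp := hs m hm l hl
      have hb : l * (A m l)⁻¹ * (l * (A m l)⁻¹) * ((l + 1)⁻¹ * (Q m l + 1)⁻¹)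
          ≤ 1 / (m * A m l) := by
        have i1 : (l + 1)⁻¹ ≤ l⁻¹ := inv_anti₀ hl (by linarith)
        have i2 : (Q m l + 1)⁻¹ ≤ (Q m l)⁻¹ := inv_anti₀ hQp (by linarith)
        calc _ ≤ l * (A m l)⁻¹ * (l * (A m l)⁻¹) * (l⁻¹ * (Q m l)⁻¹) := by gcongr
          _ = 1 / (m * A m l) / 2 := by
              simp only [Q]
              field_simp
          _ ≤ _ := half_le_self (by positivity)
      rw [one_mul]
      refine hb.trans (le_min ?_ ?_)
      · refine one_div_le_one_div_of_le (by positivity) ?_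
        rw [sq]
        refine mul_le_mul_of_nonneg_left ?_ hmp.le
        simp only [A]
        linarith
      · refine one_div_le_one_div_of_le (by positivity) ?_
        refine mul_le_mul_of_nonneg_left ?_ hmp.le
        rw [← Real.sqrt_eq_rpow]
        have : Real.sqrt (l + 1) ≤ s m l := Real.sqrt_le_sqrt (by nlinarith)
        simp only [A]
        linarith
  obtain ⟨C, hC, h⟩ := symF.2 k
  refine ⟨C + 1, by positivity, fun m hm l hl => ?_⟩
  have hmp : 0 < m := by linarith
  have hw : 0 ≤ min (1 / m ^ 2) (1 / (m * (l + 1) ^ ((1:ℝ)/2))) :=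
    le_min (by positivity) (by positivity)
  have hneg : (fun l => 1 / Pinf χ l - 1 / Pm χ m l)
      = fun l => -(1 / Pm χ m l - 1 / Pinf χ l) := by
    funext x
    ring
  have h1 := h m hm l hl
  beta_reduce at h1
  rw [eul, abs_mul, abs_of_pos (pow_pos hl k)] at h1
  rw [hneg, iteratedDeriv_fun_neg, abs_neg, div_mul_eq_mul_div, le_div_iff₀ (pow_pos hl k)]
  linarith
end
end

section
/- Symbol estimate for the weighted difference of inverse symbols (proved inside Theorem A.3). Fix λ₁ > 0 and a smooth function χ : ℝ → [0,1] with χ(λ) = 1 for λ ≤ λ₁/2 and χ(λ) = 0 for λ ≥ λ₁. For m > 0 set P_m(λ) = 2m(√(λ+m²) − m) + χ(λ) and P_∞(λ) = λ + χ(λ). Then for every positive integer k there exists a constant C_k > 0 such that for all m ≥ 2 and all λ > 0, | (d/dλ)^k ( ( 1/P_∞(λ) − 1/P_m(λ) ) · (P_∞(λ))^{1/2} ) | ≤ C_k / ( m λ^k ). -/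
/-!
With `r = √(λ + m²) + m` one has `2m(√(λ + m²) - m) = 2mλ / r` and `P_m - P_∞ = -λ² / r²`, so the
function to be estimated equals `-λ² r⁻² P_∞^{-1/2} P_m⁻¹`. Its size is at most `1 / (2m)` because
`P_∞ ≥ λ`, `P_m ≥ 2mλ / r` and `r ≥ √λ`.

The derivatives are handled by a symbol calculus for the Euler operator `D = λ d/dλ`: a family
`f_m` is a symbol of weight `w_m` if `|Dʲ f_m| ≤ C_j w_m` uniformly in `m ≥ 2` and `λ > 0`
(`SymN`). Since `D` is a derivation, symbols are stable under sums and products, and a positive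
symbol whose weight is itself (`SelfSym`) has all its real powers of the same kind
(`SymN.rpow`). The functions `λ`, `m`, `r`, `P_∞`, `P_m` are all of this kind; for the last two
this uses that `χ` is a symbol of weight `1` (`symN_cutoff`) and that `P_∞` and `P_m` are bounded
below by positive constants independent of `m`. Hence the whole product is a symbol with its own
absolute value as weight, and the passage from `Dʲ` to `λᵏ (d/dλ)ᵏ` is `SymN.iteratedDeriv`.
-/

noncomputable section

/-- Symbol estimates up to order `n`: the family `f m` satisfies `|Dʲ (f m)| ≤ C_j w m` for
`j ≤ n`, uniformly in `m ≥ 2` and `l > 0`, where `D = l d/dl`. Differentiability of the functions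
`Dʲ (f m)`, `j < n`, on the half-line is part of the definition. -/
def SymN : ℕ → (ℝ → ℝ → ℝ) → (ℝ → ℝ → ℝ) → Prop
  | 0, f, w => ∃ C : ℝ, 0 ≤ C ∧ ∀ m, 2 ≤ m → ∀ l, 0 < l → |f m l| ≤ C * w m l
  | n + 1, f, w => (∃ C : ℝ, 0 ≤ C ∧ ∀ m, 2 ≤ m → ∀ l, 0 < l → |f m l| ≤ C * w m l) ∧
      (∀ m, 2 ≤ m → ∀ l, 0 < l → DifferentiableAt ℝ (f m) l) ∧
      SymN n (fun m l => l * deriv (f m) l) w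

lemma SymN.bound {n : ℕ} {f w : ℝ → ℝ → ℝ} (h : SymN n f w) :
    ∃ C : ℝ, 0 ≤ C ∧ ∀ m, 2 ≤ m → ∀ l, 0 < l → |f m l| ≤ C * w m l := by
  cases n with
  | zero => exact h
  | succ n => exact h.1

lemma SymN.of_succ {n : ℕ} {f w : ℝ → ℝ → ℝ} (h : SymN (n + 1) f w) : SymN n f w := by
  induction n generalizing f with
  | zero => exact h.1
  | succ n ih => exact ⟨h.1, h.2.1, ih h.2.2⟩

lemma SymN.congr {n : ℕ} {f g w : ℝ → ℝ → ℝ} (h : SymN n f w)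
    (hfg : ∀ m, 2 ≤ m → ∀ l, 0 < l → g m l = f m l) : SymN n g w := by
  have key : ∀ f g : ℝ → ℝ → ℝ, (∀ m, 2 ≤ m → ∀ l, 0 < l → g m l = f m l) →
      (∃ C : ℝ, 0 ≤ C ∧ ∀ m, 2 ≤ m → ∀ l, 0 < l → |f m l| ≤ C * w m l) →
      (∃ C : ℝ, 0 ≤ C ∧ ∀ m, 2 ≤ m → ∀ l, 0 < l → |g m l| ≤ C * w m l) := by
    rintro f g hfg ⟨C, hC, hb⟩
    exact ⟨C, hC, fun m hm l hl => by rw [hfg m hm l hl]; exact hb m hm l hl⟩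
  induction n generalizing f g with
  | zero => exact key f g hfg h
  | succ n ih =>
    have hev : ∀ m, 2 ≤ m → ∀ l, 0 < l → g m =ᶠ[nhds l] f m := fun m hm l hl => by
      filter_upwards [Ioi_mem_nhds hl] with x hx using hfg m hm x hx
    refine ⟨key f g hfg h.1, fun m hm l hl => ?_, ih h.2.2 fun m hm l hl => ?_⟩
    · exact (h.2.1 m hm l hl).congr_of_eventuallyEq (hev m hm l hl)
    · simp only [(hev m hm l hl).deriv_eq]

lemma SymN.mono {n : ℕ} {f w v : ℝ → ℝ → ℝ} (h : SymN n f w) (K : ℝ) (hK : 0 ≤ K)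
    (hwv : ∀ m, 2 ≤ m → ∀ l, 0 < l → w m l ≤ K * v m l) : SymN n f v := by
  have key : ∀ f : ℝ → ℝ → ℝ,
      (∃ C : ℝ, 0 ≤ C ∧ ∀ m, 2 ≤ m → ∀ l, 0 < l → |f m l| ≤ C * w m l) →
      (∃ C : ℝ, 0 ≤ C ∧ ∀ m, 2 ≤ m → ∀ l, 0 < l → |f m l| ≤ C * v m l) := by
    rintro f ⟨C, hC, hb⟩
    refine ⟨C * K, by positivity, fun m hm l hl => (hb m hm l hl).trans ?_⟩
    rw [mul_assoc]
    exact mul_le_mul_of_nonneg_left (hwv m hm l hl) hC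
  induction n generalizing f with
  | zero => exact key f h
  | succ n ih => exact ⟨key f h.1, h.2.1, ih h.2.2⟩

lemma SymN.add {n : ℕ} {f g w : ℝ → ℝ → ℝ} (hf : SymN n f w) (hg : SymN n g w) :
    SymN n (fun m l => f m l + g m l) w := by
  have key : ∀ f g : ℝ → ℝ → ℝ,
      (∃ C : ℝ, 0 ≤ C ∧ ∀ m, 2 ≤ m → ∀ l, 0 < l → |f m l| ≤ C * w m l) →
      (∃ C : ℝ, 0 ≤ C ∧ ∀ m, 2 ≤ m → ∀ l, 0 < l → |g m l| ≤ C * w m l) →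
      (∃ C : ℝ, 0 ≤ C ∧ ∀ m, 2 ≤ m → ∀ l, 0 < l → |f m l + g m l| ≤ C * w m l) := by
    rintro f g ⟨C, hC, hb⟩ ⟨C', hC', hb'⟩
    refine ⟨C + C', by positivity, fun m hm l hl => (abs_add_le _ _).trans ?_⟩
    linarith [hb m hm l hl, hb' m hm l hl]
  induction n generalizing f g with
  | zero => exact key f g hf hg
  | succ n ih =>
    refine ⟨key f g hf.1 hg.1, fun m hm l hl => (hf.2.1 m hm l hl).add (hg.2.1 m hm l hl),
      (ih hf.2.2 hg.2.2).congr fun m hm l hl => ?_⟩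
    rw [((hf.2.1 m hm l hl).hasDerivAt.fun_add (hg.2.1 m hm l hl).hasDerivAt).deriv]
    ring

lemma SymN.mul {n : ℕ} {f g w v : ℝ → ℝ → ℝ} (hf : SymN n f w) (hg : SymN n g v) :
    SymN n (fun m l => f m l * g m l) (fun m l => w m l * v m l) := by
  have key : ∀ f g : ℝ → ℝ → ℝ,
      (∃ C : ℝ, 0 ≤ C ∧ ∀ m, 2 ≤ m → ∀ l, 0 < l → |f m l| ≤ C * w m l) →
      (∃ C : ℝ, 0 ≤ C ∧ ∀ m, 2 ≤ m → ∀ l, 0 < l → |g m l| ≤ C * v m l) →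
      (∃ C : ℝ, 0 ≤ C ∧ ∀ m, 2 ≤ m → ∀ l, 0 < l →
        |f m l * g m l| ≤ C * (w m l * v m l)) := by
    rintro f g ⟨C, hC, hb⟩ ⟨C', hC', hb'⟩
    refine ⟨C * C', by positivity, fun m hm l hl => ?_⟩
    rw [abs_mul, mul_mul_mul_comm]
    exact mul_le_mul (hb m hm l hl) (hb' m hm l hl) (abs_nonneg _)
      ((abs_nonneg _).trans (hb m hm l hl))
  induction n generalizing f g with
  | zero => exact key f g hf hg
  | succ n ih =>
    refine ⟨key f g hf.1 hg.1, fun m hm l hl => (hf.2.1 m hm l hl).mul (hg.2.1 m hm l hl),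
      ((ih hf.2.2 hg.of_succ).add (ih hf.of_succ hg.2.2)).congr fun m hm l hl => ?_⟩
    rw [((hf.2.1 m hm l hl).hasDerivAt.fun_mul (hg.2.1 m hm l hl).hasDerivAt).deriv]
    ring

lemma symN_zero (n : ℕ) (w : ℝ → ℝ → ℝ) : SymN n (fun _ _ => 0) w := by
  induction n with
  | zero => exact ⟨0, le_rfl, by simp⟩
  | succ n ih => exact ⟨⟨0, le_rfl, by simp⟩, by simp, ih.congr (by simp)⟩

lemma symN_const (n : ℕ) (c : ℝ → ℝ) : SymN n (fun m _ => c m) (fun m _ => |c m|) := by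
  have hb : ∃ C : ℝ, 0 ≤ C ∧ ∀ m, 2 ≤ m → ∀ l : ℝ, 0 < l → |c m| ≤ C * |c m| :=
    ⟨1, zero_le_one, by simp⟩
  cases n with
  | zero => exact hb
  | succ n => exact ⟨hb, by simp, (symN_zero n _).congr (by simp)⟩

lemma symN_id (n : ℕ) : SymN n (fun _ l => l) (fun _ l => l) := by
  have hb : ∃ C : ℝ, 0 ≤ C ∧ ∀ m, (2 : ℝ) ≤ m → ∀ l : ℝ, 0 < l → |l| ≤ C * l :=
    ⟨1, zero_le_one, fun m _ l hl => by rw [abs_of_pos hl, one_mul]⟩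
  induction n with
  | zero => exact hb
  | succ n ih => exact ⟨hb, fun m _ l _ => differentiableAt_id, ih.congr (by simp)⟩

lemma SymN.const_mul {n : ℕ} {f w : ℝ → ℝ → ℝ} (c : ℝ) (h : SymN n f w) :
    SymN n (fun m l => c * f m l) w :=
  ((symN_const n fun _ => c).mul h).mono |c| (abs_nonneg c) (fun _ _ _ _ => le_rfl)

/-- Real powers of a positive symbol whose weight is itself. The induction runs over all exponents
at once because `D (f ^ a) = a * f ^ (a - 1) * D f`. -/
lemma SymN.rpow {n : ℕ} {f : ℝ → ℝ → ℝ} (h : SymN n f f)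
    (hpos : ∀ m, 2 ≤ m → ∀ l, 0 < l → 0 < f m l) (a : ℝ) :
    SymN n (fun m l => f m l ^ a) (fun m l => f m l ^ a) := by
  have hb : ∀ a : ℝ, ∃ C : ℝ, 0 ≤ C ∧ ∀ m, 2 ≤ m → ∀ l, 0 < l →
      |f m l ^ a| ≤ C * f m l ^ a := fun a => ⟨1, zero_le_one, fun m hm l hl => by
    rw [abs_of_pos (Real.rpow_pos_of_pos (hpos m hm l hl) a), one_mul]⟩
  induction n generalizing a with
  | zero => exact hb a
  | succ n ih =>
    refine ⟨hb a, fun m hm l hl => (h.2.1 m hm l hl).rpow_const (Or.inl (hpos m hm l hl).ne'), ?_⟩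
    have h1 := (((ih h.of_succ (a - 1)).mul h.2.2).const_mul a).mono
      (v := fun m l => f m l ^ a) 1 zero_le_one (fun m hm l hl => by
        rw [one_mul, Real.rpow_sub_one (hpos m hm l hl).ne', div_mul_cancel₀ _ (hpos m hm l hl).ne'])
    refine h1.congr fun m hm l hl => ?_
    rw [((h.2.1 m hm l hl).hasDerivAt.rpow_const (Or.inl (hpos m hm l hl).ne')).deriv]
    ring

/-- The identity `l^(k+1) f⁽ᵏ⁺¹⁾ = D (l^k f⁽ᵏ⁾) - k l^k f⁽ᵏ⁾` turns bounds on iterates of `D` into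
bounds on `l^k f⁽ᵏ⁾`. -/
lemma SymN.iteratedDeriv {f w : ℝ → ℝ → ℝ} (k n : ℕ) (h : SymN (n + k) f w) :
    SymN n (fun m l => l ^ k * iteratedDeriv k (f m) l) w := by
  induction k generalizing n with
  | zero => simpa using h
  | succ k ih =>
    have h1 := ih (n + 1) (by rwa [add_assoc, add_comm 1 k])
    refine (h1.2.2.add (h1.of_succ.const_mul (-(k : ℝ)))).congr fun m hm l hl => ?_
    have hd : DifferentiableAt ℝ (_root_.iteratedDeriv k (f m)) l := by
      have h2 := (h1.2.1 m hm l hl).div (differentiableAt_id.pow k) (pow_ne_zero k hl.ne')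
      refine h2.congr_of_eventuallyEq ?_
      filter_upwards [Ioi_mem_nhds hl] with x hx
      have hx' : x ^ k ≠ 0 := pow_ne_zero k (ne_of_gt hx)
      simp [hx']
    rw [((hasDerivAt_pow k l).fun_mul hd.hasDerivAt).deriv, iteratedDeriv_succ]
    rcases k with _ | k
    · simp
    · simp only [Nat.add_sub_cancel]
      ring

/-- A smooth function of `l` alone vanishing for `l > L` is a symbol of weight `1`. -/
lemma symN_cutoff (L : ℝ) (n : ℕ) (φ : ℝ → ℝ) (hφ : ContDiff ℝ (⊤ : ℕ∞) φ)
    (h0 : ∀ l, L < l → φ l = 0) : SymN n (fun _ l => φ l) (fun _ _ => 1) := by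
  have hb : ∀ φ : ℝ → ℝ, ContDiff ℝ (⊤ : ℕ∞) φ → (∀ l, L < l → φ l = 0) →
      ∃ C : ℝ, 0 ≤ C ∧ ∀ m, (2 : ℝ) ≤ m → ∀ l, 0 < l → |φ l| ≤ C * 1 := by
    intro φ hφ h0
    obtain ⟨C, hC⟩ := (isCompact_Icc (a := 0) (b := L)).exists_bound_of_continuousOn
      hφ.continuous.continuousOn
    refine ⟨max C 0, le_max_right _ _, fun m _ l hl => ?_⟩
    rw [mul_one]
    rcases le_or_gt l L with h | h
    · exact (hC l ⟨hl.le, h⟩).trans (le_max_left _ _)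
    · rw [h0 l h, abs_zero]; exact le_max_right _ _
  induction n generalizing φ with
  | zero => exact hb φ hφ h0
  | succ n ih =>
    refine ⟨hb φ hφ h0, fun m _ l _ => (hφ.differentiable (by simp)).differentiableAt,
      ih (fun l => l * deriv φ l) ?_ fun l hl => ?_⟩
    · exact contDiff_id.mul ((contDiff_infty_iff_deriv.1 hφ).2)
    · have : φ =ᶠ[nhds l] fun _ => 0 := by
        filter_upwards [Ioi_mem_nhds hl] with x hx using h0 x hx
      simp [this.deriv_eq]

/-- A positive family that satisfies symbol estimates of all orders with itself as weight. -/
def SelfSym (f : ℝ → ℝ → ℝ) : Prop :=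
  (∀ m, 2 ≤ m → ∀ l, 0 < l → 0 < f m l) ∧ ∀ n, SymN n f f

lemma SelfSym.mul {f g : ℝ → ℝ → ℝ} (hf : SelfSym f) (hg : SelfSym g) :
    SelfSym fun m l => f m l * g m l :=
  ⟨fun m hm l hl => mul_pos (hf.1 m hm l hl) (hg.1 m hm l hl), fun n => (hf.2 n).mul (hg.2 n)⟩

lemma SelfSym.add {f g : ℝ → ℝ → ℝ} (hf : SelfSym f) (hg : SelfSym g) :
    SelfSym fun m l => f m l + g m l := by
  refine ⟨fun m hm l hl => add_pos (hf.1 m hm l hl) (hg.1 m hm l hl), fun n => ?_⟩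
  refine ((hf.2 n).mono 1 zero_le_one ?_).add ((hg.2 n).mono 1 zero_le_one ?_)
  · intro m hm l hl; linarith [hg.1 m hm l hl]
  · intro m hm l hl; linarith [hf.1 m hm l hl]

lemma SelfSym.rpow {f : ℝ → ℝ → ℝ} (hf : SelfSym f) (a : ℝ) :
    SelfSym fun m l => f m l ^ a :=
  ⟨fun m hm l hl => Real.rpow_pos_of_pos (hf.1 m hm l hl) a, fun n => (hf.2 n).rpow hf.1 a⟩

lemma selfSym_const (c : ℝ → ℝ) (hc : ∀ m, 2 ≤ m → 0 < c m) : SelfSym fun m _ => c m :=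
  ⟨fun m hm _ _ => hc m hm, fun n => (symN_const n c).mono 1 zero_le_one fun m hm _ _ => by
    rw [abs_of_pos (hc m hm), one_mul]⟩

lemma selfSym_id : SelfSym fun _ l => l := ⟨fun _ _ _ h => h, symN_id⟩

/-- Adding a symbol of weight `1` preserves `SelfSym` when that symbol is nonnegative and the sum
is bounded below by a positive constant. -/
lemma SelfSym.add_one_weight {f : ℝ → ℝ → ℝ} {φ : ℝ → ℝ} (hf : SelfSym f)
    (hφ : ∀ n, SymN n (fun _ l => φ l) (fun _ _ => 1)) (hφ0 : ∀ l, 0 ≤ φ l) (c : ℝ) (hc : 0 < c)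
    (hlow : ∀ m, 2 ≤ m → ∀ l, 0 < l → c ≤ f m l + φ l) :
    SelfSym fun m l => f m l + φ l := by
  refine ⟨fun m hm l hl => hc.trans_le (hlow m hm l hl), fun n => ?_⟩
  refine ((hf.2 n).mono 1 zero_le_one ?_).add ((hφ n).mono c⁻¹ (by positivity) ?_)
  · intro m hm l hl; linarith [hφ0 l]
  · intro m hm l hl
    rw [inv_mul_eq_div, one_le_div hc]
    exact hlow m hm l hl

/-- The denominator `r = √(l + m²) + m` produced by rationalizing `√(l + m²) - m`. -/
def rr (m l : ℝ) : ℝ := Real.sqrt (l + m ^ 2) + m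

lemma selfSym_rr : SelfSym rr := by
  have hm : SelfSym fun m _ => m := selfSym_const _ fun m hm => by linarith
  have hm2 : SelfSym fun m _ => m ^ 2 := selfSym_const _ fun m hm => by positivity
  have h := ((selfSym_id.add hm2).rpow (1 / 2)).add hm
  simp only [← Real.sqrt_eq_rpow] at h
  exact h

lemma rr_pos {m l : ℝ} (hm : 2 ≤ m) : 0 < rr m l := by
  unfold rr; positivity

lemma rr_mul {m l : ℝ} (hl : 0 < l) : rr m l * (Real.sqrt (l + m ^ 2) - m) = l := by
  have := Real.sq_sqrt (show 0 ≤ l + m ^ 2 by positivity)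
  unfold rr; linear_combination this

lemma Pm_eq (χ : ℝ → ℝ) {m l : ℝ} (hm : 2 ≤ m) (hl : 0 < l) :
    Pm χ m l = 2 * m * (l * rr m l ^ (-1 : ℝ)) + χ l := by
  have hr := rr_pos (l := l) hm
  have h := rr_mul (m := m) hl
  have h2 : Real.sqrt (l + m ^ 2) - m = l * (rr m l)⁻¹ := by
    field_simp; linarith
  rw [Pm, h2, Real.rpow_neg_one]

lemma rr_le {m l : ℝ} (hm : 2 ≤ m) (hl : 0 < l) : rr m l ≤ 2 * m + l := by
  have : Real.sqrt (l + m ^ 2) ≤ m + l := by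
    apply Real.sqrt_le_iff.2
    constructor
    · linarith
    · nlinarith
  unfold rr; linarith

lemma sqrt_le_rr {m l : ℝ} (hm : 2 ≤ m) : Real.sqrt l ≤ rr m l := by
  have : Real.sqrt l ≤ Real.sqrt (l + m ^ 2) := Real.sqrt_le_sqrt (by nlinarith)
  unfold rr; linarith

/-- **Symbol estimate for the weighted difference of inverse symbols**
(proved inside Theorem A.3). -/
theorem symbol_weighted_inverse_difference_estimate
    (lam1 : ℝ) (hlam1 : 0 < lam1) (χ : ℝ → ℝ)
    (hχ : ContDiff ℝ (⊤ : ℕ∞) χ)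
    (hχrange : ∀ l : ℝ, χ l ∈ Set.Icc (0:ℝ) 1)
    (hχone : ∀ l : ℝ, l ≤ lam1 / 2 → χ l = 1)
    (hχzero : ∀ l : ℝ, lam1 ≤ l → χ l = 0)
    (k : ℕ) (hk : 1 ≤ k) :
    ∃ C > (0:ℝ), ∀ m : ℝ, 2 ≤ m → ∀ lam : ℝ, 0 < lam →
      |iteratedDeriv k
          (fun l => (1 / Pinf χ l - 1 / Pm χ m l) * (Pinf χ l) ^ ((1:ℝ)/2)) lam| ≤
        C / (m * lam ^ k) := by
  have hφ : ∀ n, SymN n (fun _ l => χ l) (fun _ _ => 1) := fun n =>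
    symN_cutoff lam1 n χ hχ fun l hl => hχzero l hl.le
  have hχ0 : ∀ l, 0 ≤ χ l := fun l => (hχrange l).1
  have hA : SelfSym fun m l => 2 * m * (l * rr m l ^ (-1 : ℝ)) :=
    (selfSym_const (fun m => 2 * m) fun m hm => by linarith).mul
      (selfSym_id.mul (selfSym_rr.rpow (-1)))
  have hPinf : SelfSym fun _ l => l + χ l := by
    refine selfSym_id.add_one_weight hφ hχ0 (min 1 (lam1 / 2)) (by positivity) fun m _ l hl => ?_
    rcases le_or_gt l (lam1 / 2) with h | h
    · rw [hχone l h]; exact (min_le_left _ _).trans (by linarith)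
    · exact (min_le_right _ _).trans (by linarith [hχ0 l])
  have hPm : SelfSym fun m l => 2 * m * (l * rr m l ^ (-1 : ℝ)) + χ l := by
    -- For `l ≥ a := lam1 / 2` one has `2ml / r ≥ 2ml / (2m + l) ≥ 2a / (2 + a)`.
    refine hA.add_one_weight hφ hχ0 (min 1 (2 * (lam1 / 2) / (2 + lam1 / 2))) (by positivity)
      fun m hm l hl => ?_
    rcases le_or_gt l (lam1 / 2) with h | h
    · rw [hχone l h]; exact (min_le_left _ _).trans (by linarith [hA.1 m hm l hl])
    · refine (min_le_right _ _).trans ?_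
      have hr := rr_pos (l := l) hm
      have h1 : 2 * (lam1 / 2) / (2 + lam1 / 2) ≤ 2 * m * (l * rr m l ^ (-1 : ℝ)) := by
        rw [Real.rpow_neg_one, ← div_eq_mul_inv, ← mul_div_assoc (2 * m),
          div_le_div_iff₀ (by positivity) hr]
        have h2 : 2 * (lam1 / 2) * rr m l ≤ 2 * (lam1 / 2) * (2 * m + l) :=
          mul_le_mul_of_nonneg_left (rr_le hm hl) (by positivity)
        have h3 : 0 ≤ (l - lam1 / 2) * m := mul_nonneg (by linarith) (by linarith)
        have h4 : 0 ≤ (m - 2) * (lam1 * l) := mul_nonneg (by linarith) (by positivity)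
        nlinarith
      linarith [hχ0 l]
  have hl2 : SelfSym fun m l => l * rr m l ^ (-1 : ℝ) := selfSym_id.mul (selfSym_rr.rpow (-1))
  have hF := ((hl2.mul hl2).mul (hPinf.rpow (-(1 / 2)))).mul (hPm.rpow (-1))
  have hG := (((hF.2 (0 + k)).const_mul (-1)).mono (v := fun m _ => m⁻¹) 1 zero_le_one ?_)
  · have hH := SymN.iteratedDeriv k 0 (hG.congr (g := fun m l =>
      (1 / Pinf χ l - 1 / Pm χ m l) * (Pinf χ l) ^ ((1:ℝ)/2)) ?_)
    · obtain ⟨C, hC, hb⟩ := hH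
      refine ⟨C + 1, by positivity, fun m hm l hl => ?_⟩
      have h := hb m hm l hl
      rw [abs_mul, abs_of_pos (pow_pos hl k)] at h
      have hm0 : 0 < m := by linarith
      rw [le_div_iff₀ (by positivity)]
      calc _ = (l ^ k * |iteratedDeriv k (fun l => (1 / Pinf χ l - 1 / Pm χ m l) *
              (Pinf χ l) ^ ((1:ℝ)/2)) l|) * m := by ring
        _ ≤ C * m⁻¹ * m := mul_le_mul_of_nonneg_right h hm0.le
        _ = C := by field_simp
        _ ≤ C + 1 := by linarith
    · intro m hm l hl
      have hr := rr_pos (l := l) hm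
      have hp : 0 < Pinf χ l := hPinf.1 m hm l hl
      have hq : 0 < Pm χ m l := by rw [Pm_eq χ hm hl]; exact hPm.1 m hm l hl
      -- The identity `P_m - P_∞ = -(l / r)²`.
      have hdiff : Pm χ m l - Pinf χ l = -(l * rr m l ^ (-1 : ℝ)) ^ 2 := by
        have h2 : l * rr m l ^ (-1 : ℝ) = Real.sqrt (l + m ^ 2) - m := by
          rw [Real.rpow_neg_one, ← div_eq_mul_inv, div_eq_iff hr.ne', mul_comm, rr_mul hl]
        have := Real.sq_sqrt (show 0 ≤ l + m ^ 2 by positivity)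
        rw [h2, Pm, Pinf]; linear_combination this
      have hhalf : Pinf χ l ^ ((1:ℝ)/2) = Pinf χ l * Pinf χ l ^ (-(1 / 2) : ℝ) := by
        conv_rhs => rw [← Real.rpow_one_add' hp.le (by norm_num)]
        norm_num
      rw [← Pm_eq χ hm hl, hhalf, Real.rpow_neg_one (Pm χ m l)]
      change _ = -1 * (_ * Pinf χ l ^ (-(1 / 2) : ℝ) * _)
      generalize Pinf χ l ^ (-(1 / 2) : ℝ) = z
      field_simp
      linear_combination z * hdiff
  · intro m hm l hl
    have hr := rr_pos (l := l) hm
    have hm0 : 0 < m := by linarith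
    have hs := Real.sqrt_pos.2 hl
    have hu := hl2.1 m hm l hl
    rw [one_mul]
    have h1 : (l + χ l) ^ (-(1 / 2) : ℝ) ≤ (Real.sqrt l)⁻¹ := by
      rw [Real.sqrt_eq_rpow, ← Real.rpow_neg hl.le]
      exact Real.rpow_le_rpow_of_nonpos hl (by linarith [hχ0 l]) (by norm_num)
    have h2 : (2 * m * (l * rr m l ^ (-1 : ℝ)) + χ l) ^ (-1 : ℝ) ≤
        (2 * m * (l * rr m l ^ (-1 : ℝ)))⁻¹ := by
      rw [Real.rpow_neg_one]
      exact inv_anti₀ (hA.1 m hm l hl) (by linarith [hχ0 l])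
    have h3 : l * rr m l ^ (-1 : ℝ) ≤ Real.sqrt l := by
      rw [Real.rpow_neg_one, ← div_eq_mul_inv, div_le_iff₀ hr]
      nlinarith [sqrt_le_rr (l := l) hm, Real.mul_self_sqrt hl.le]
    have hq := (hPm.rpow (-1)).1 m hm l hl
    calc _ ≤ (l * rr m l ^ (-1 : ℝ)) * (l * rr m l ^ (-1 : ℝ)) * (Real.sqrt l)⁻¹ *
          (2 * m * (l * rr m l ^ (-1 : ℝ)))⁻¹ := by gcongr
      _ = (l * rr m l ^ (-1 : ℝ)) / Real.sqrt l * (2 * m)⁻¹ := by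
        generalize l * rr m l ^ (-1 : ℝ) = u at *
        field_simp
      _ ≤ 1 * (2 * m)⁻¹ := by
        gcongr
        exact (div_le_one hs).2 h3
      _ ≤ m⁻¹ := by
        rw [one_mul]; exact inv_anti₀ hm0 (by linarith)
end
end

section
/- Pointwise nonlinear remainder estimate, case 1 < p ≤ 2 (from Proposition 6.4). Let 1 < p ≤ 2. Then there exists a constant C > 0, depending only on p, such that for all real numbers a, w, v: | f(a+w) − f(a+v) − p|a|^{p−1}(w − v) | ≤ C ( |w| + |v| )^{p−1} |w − v|, where f(s) = |s|^{p−1}s. -/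
/-!
The function `f s = |s|^(p-1) * s` is differentiable everywhere with `f' s = p * |s|^(p-1)`
(`hasDerivAt_abs_rpow_mul_self`). Since `0 < p - 1 ≤ 1`, the map `s ↦ |s|^(p-1)` is
`(p-1)`-Hölder with constant `1` (`abs_abs_rpow_sub_le`), so `x ↦ f (a + x) - p * |a|^(p-1) * x` has
derivative bounded by `p * (|w| + |v|)^(p-1)` on the interval `|x| ≤ |w| + |v|`. That interval is
convex and contains `w` and `v`, so the mean value inequality gives the estimate with `C = p`.
-/

theorem hasDerivAt_abs_rpow_mul_self {p : ℝ} (hp : 1 < p) (s : ℝ) :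
    HasDerivAt (fun x : ℝ => |x| ^ (p - 1) * x) (p * |s| ^ (p - 1)) s := by
  by_cases hs : s = 0
  · -- At the origin the difference quotient is `|x|^(p-1)`, which tends to `0`.
    subst hs
    have h0 : p - 1 ≠ 0 := by linarith
    rw [hasDerivAt_iff_tendsto_slope]
    have hc : Continuous (fun x : ℝ => |x| ^ (p - 1)) :=
      continuous_abs.rpow_const (fun _ => Or.inr (by linarith))
    have ht := (hc.tendsto 0).mono_left (nhdsWithin_le_nhds (s := {0}ᶜ))
    simp only [abs_zero, Real.zero_rpow h0, mul_zero] at ht ⊢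
    refine ht.congr' ?_
    filter_upwards [self_mem_nhdsWithin] with x hx
    have hx' : x ≠ 0 := hx
    simp [slope_def_field, hx']
  · have hpos : 0 < |s| := abs_pos.mpr hs
    have h := ((hasDerivAt_abs hs).rpow_const (p := p - 1) (Or.inl hpos.ne')).mul (hasDerivAt_id s)
    refine h.congr_deriv ?_
    have h1 : |s| ^ (p - 1) = |s| ^ (p - 1 - 1) * |s| := by
      rw [← Real.rpow_add_one hpos.ne']
      ring_nf
    have h2 : (SignType.sign s : ℝ) * s = |s| := sign_mul_self s
    simp only [id, mul_one]
    rw [h1]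
    linear_combination (p - 1) * |s| ^ (p - 1 - 1) * h2

theorem abs_abs_rpow_sub_le {q : ℝ} (hq0 : 0 ≤ q) (hq1 : q ≤ 1) (a x : ℝ) :
    |(|a + x| ^ q - |a| ^ q)| ≤ |x| ^ q := by
  have key : ∀ b y : ℝ, |b + y| ^ q ≤ |b| ^ q + |y| ^ q := fun b y =>
    (Real.rpow_le_rpow (abs_nonneg _) (abs_add_le b y) hq0).trans
      (Real.rpow_add_le_add_rpow (abs_nonneg _) (abs_nonneg _) hq0 hq1)
  have h1 := key a x
  have h2 := key (a + x) (-x)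
  rw [add_neg_cancel_right, abs_neg] at h2
  rw [abs_le]
  constructor <;> linarith

/-- **Pointwise nonlinear remainder estimate, case `1 < p ≤ 2`** (from Proposition 6.4).
Here `f s = |s|^(p-1) * s`. -/
theorem pointwise_remainder_estimate_subquadratic
    (p : ℝ) (hp1 : 1 < p) (hp2 : p ≤ 2) :
    ∃ C > (0:ℝ), ∀ a w v : ℝ,
      |(|a + w| ^ (p - 1) * (a + w)) - (|a + v| ^ (p - 1) * (a + v)) -
          p * |a| ^ (p - 1) * (w - v)| ≤
        C * (|w| + |v|) ^ (p - 1) * |w - v| := by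
  refine ⟨p, by linarith, fun a w v => ?_⟩
  have hd : ∀ x : ℝ, HasDerivAt
      (fun x : ℝ => |a + x| ^ (p - 1) * (a + x) - p * |a| ^ (p - 1) * x)
      (p * (|a + x| ^ (p - 1) - |a| ^ (p - 1))) x := fun x =>
    (((hasDerivAt_abs_rpow_mul_self hp1 (a + x)).comp_const_add a x).sub
      ((hasDerivAt_id x).const_mul (p * |a| ^ (p - 1)))).congr_deriv (by ring)
  have hmvt := (convex_closedBall (0 : ℝ) (|w| + |v|)).norm_image_sub_le_of_norm_hasDerivWithin_le
    (C := p * (|w| + |v|) ^ (p - 1)) (x := v) (y := w)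
    (fun x _ => (hd x).hasDerivWithinAt) (fun x hx => ?_) (by simp) (by simp)
  · simp only [Real.norm_eq_abs] at hmvt
    convert hmvt using 2
    ring
  · have hx' : |x| ≤ |w| + |v| := by simpa using hx
    rw [Real.norm_eq_abs, abs_mul, abs_of_pos (by linarith : 0 < p)]
    refine mul_le_mul_of_nonneg_left ?_ (by linarith)
    exact (abs_abs_rpow_sub_le (by linarith) (by linarith) a x).trans
      (Real.rpow_le_rpow (abs_nonneg _) hx' (by linarith))
end
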